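/- Let 0 < γ < 1 and ν > −1/2. Then for all x > 0, ∫_0^x e^{−γt} t^ν I_ν(t) dt < ( 2(2ν+7) / ((2ν+1)(1−γ)) ) · e^{−γx} x^ν I_{ν+1}(x). -/

import Mathlib

open Real MeasureTheory

/-- Modified Bessel function of the first kind, `I_ν(x) = ∑_{k} (x/2)^{ν+2k} / (Γ(ν+k+1) k!)`. -/
noncomputable def besselI (ν x : ℝ) : ℝ :=
  ∑' k : ℕ, (x / 2) ^ (ν + 2 * (k : ℝ)) / (Real.Gamma (ν + (k : ℝ) + 1) * (Nat.factorial k : ℝ))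

/-- Modified Bessel function of the second kind, `K_ν(x) = ∫_0^∞ e^{-x cosh t} cosh(ν t) dt`. -/
noncomputable def besselK (ν x : ℝ) : ℝ :=
  ∫ t in Set.Ioi (0 : ℝ), Real.exp (-x * Real.cosh t) * Real.cosh (ν * t)

/-- Lower incomplete gamma function `γ(a, x) = ∫_0^x t^{a-1} e^{-t} dt`. -/
noncomputable def lowerIncGamma (a x : ℝ) : ℝ :=
  ∫ t in (0 : ℝ)..x, t ^ (a - 1) * Real.exp (-t)

/-! The functions `C_ν(z) = ∑ zᵏ / (Γ(ν+k+1) k!)` satisfy `C_ν' = C_{ν+1}`, and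
`I_ν(x) = (x/2)^ν C_ν(x²/4)`; this gives the derivative and the recurrence of `I_ν`.
By these, the derivative of `e^{cx} x^{ν+1} (I_ν + s I_{ν+1})` is
`e^{cx} x^ν ((2ν+1) I_ν + (c+s) x I_ν + (1+cs) x I_{ν+1})`. With `c = 1`, `s = -1` this yields
`I_{ν+1} < I_ν`. With `c = -γ`, `s = 1` it bounds `(2ν+1) ∫₀ˣ e^{-γt} t^ν I_ν(t) dt` by
`2 (x+ν+1) W(x)`, where `W(x) = e^{-γx} x^ν I_{ν+1}(x)`; this is good enough up to the point
`a = 2/(1-γ)`. Beyond `a`, the inequality `I_{ν+1} < I_ν` gives `W' ≥ (1-γ)/2 · e^{-γx} x^ν I_ν`,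
so that the rest of the integral is at most `2 (W(x) - W(a)) / (1-γ)`. -/

open Set

section BesselClifford

/-- The Taylor coefficients at `0` of the Bessel–Clifford function. At a pole of `Γ`, where Mathlib
sets `Γ = 0`, this is `0`, which is the correct value of `1 / Γ` there. -/
noncomputable def besselCliffordCoeff (ν : ℝ) (k : ℕ) : ℝ :=
  (Real.Gamma (ν + k + 1) * (k.factorial : ℝ))⁻¹

/-- The Bessel–Clifford function `C_ν(z) = ∑_{k} z^k / (Γ(ν+k+1) k!)`, the entire function for which
`I_ν(x) = (x/2)^ν C_ν(x²/4)`. -/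
noncomputable def besselClifford (ν z : ℝ) : ℝ :=
  ∑' k : ℕ, besselCliffordCoeff ν k * z ^ k

lemma besselCliffordCoeff_pos {ν : ℝ} (hν : -1 < ν) (k : ℕ) : 0 < besselCliffordCoeff ν k := by
  have hΓ : 0 < Real.Gamma (ν + k + 1) :=
    Real.Gamma_pos_of_pos (by linarith [k.cast_nonneg (α := ℝ)])
  unfold besselCliffordCoeff
  positivity

lemma besselCliffordCoeff_succ_mul (ν : ℝ) (k : ℕ) :
    besselCliffordCoeff ν (k + 1) * (k + 1) = besselCliffordCoeff (ν + 1) k := by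
  have harg : ν + ((k + 1 : ℕ) : ℝ) + 1 = ν + 1 + k + 1 := by push_cast; ring
  have hk : (k : ℝ) + 1 ≠ 0 := k.cast_add_one_ne_zero
  rw [besselCliffordCoeff, besselCliffordCoeff, harg, Nat.factorial_succ]
  push_cast
  field_simp

lemma besselCliffordCoeff_eq_mul (ν : ℝ) (k : ℕ) :
    besselCliffordCoeff ν k = (ν + k + 1) * besselCliffordCoeff (ν + 1) k := by
  have harg : ν + 1 + (k : ℝ) + 1 = ν + k + 1 + 1 := by ring
  unfold besselCliffordCoeff
  rw [harg]
  rcases eq_or_ne (ν + k + 1) 0 with hzero | hzero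
  · simp [hzero, Real.Gamma_zero]
  · rw [Real.Gamma_add_one hzero]
    field_simp

lemma summable_besselClifford (ν z : ℝ) :
    Summable fun k : ℕ => besselCliffordCoeff ν k * z ^ k := by
  have hradius : (Complex.regularizedHGFunSeries 0 {(ν + 1 : ℂ)}).radius = ⊤ :=
    Complex.radius_regularizedHGFunSeries_eq_top (by simp)
  have hsum := (Complex.regularizedHGFunSeries 0 {(ν + 1 : ℂ)}).summable (x := (z : ℂ))
    (by simp [hradius])
  rw [← Complex.summable_ofReal]
  refine hsum.congr fun k => ?_
  have harg : (ν : ℂ) + 1 + k = ((ν + k + 1 : ℝ) : ℂ) := by push_cast; ring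
  simp only [Complex.regularizedHGFunSeries, Complex.regularizedHGFunCoeff, besselCliffordCoeff,
    FormalMultilinearSeries.ofScalars_apply_eq, Multiset.map_zero, Multiset.prod_zero,
    Multiset.map_singleton, Multiset.prod_singleton, harg, Complex.Gamma_ofReal, smul_eq_mul]
  push_cast
  ring

lemma besselClifford_pos {ν z : ℝ} (hν : -1 < ν) (hz : 0 ≤ z) : 0 < besselClifford ν z := by
  refine (summable_besselClifford ν z).tsum_pos
    (fun k => mul_nonneg (besselCliffordCoeff_pos hν k).le (pow_nonneg hz k)) 0 ?_
  simpa using besselCliffordCoeff_pos hν 0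

lemma hasSum_besselClifford_add_one (ν z : ℝ) :
    HasSum (fun k : ℕ => besselCliffordCoeff ν k * (k * z ^ (k - 1)))
      (besselClifford (ν + 1) z) := by
  rw [← hasSum_nat_add_iff' 1]
  simpa [← besselCliffordCoeff_succ_mul, besselClifford, mul_assoc] using
    (summable_besselClifford (ν + 1) z).hasSum

lemma hasDerivAt_besselClifford (ν z : ℝ) :
    HasDerivAt (besselClifford ν) (besselClifford (ν + 1) z) z := by
  rw [← (hasSum_besselClifford_add_one ν z).tsum_eq]
  refine hasDerivAt_tsum_of_isPreconnected
    (g := fun k y => besselCliffordCoeff ν k * y ^ k)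
    (hasSum_besselClifford_add_one ν (|z| + 1)).summable.norm Metric.isOpen_ball
    (convex_ball 0 (|z| + 1)).isPreconnected (fun k y _ => (hasDerivAt_pow k y).const_mul _)
    (fun k y hy => ?_) (y₀ := 0)
    (Metric.mem_ball_self (by positivity)) (summable_besselClifford ν 0)
    (by simp)
  have hy' : |y| ≤ |(|z| + 1)| := by
    rw [abs_of_nonneg (by positivity : 0 ≤ |z| + 1)]
    simpa using (mem_ball_zero_iff.mp hy).le
  simp only [norm_mul, norm_pow, Real.norm_eq_abs]
  gcongr

lemma continuous_besselClifford (ν : ℝ) : Continuous (besselClifford ν) :=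
  continuous_iff_continuousAt.mpr fun z => (hasDerivAt_besselClifford ν z).continuousAt

lemma besselClifford_eq_add (ν z : ℝ) :
    besselClifford ν z
      = (ν + 1) * besselClifford (ν + 1) z + z * besselClifford (ν + 2) z := by
  have hderiv := (hasSum_besselClifford_add_one (ν + 1) z).mul_left z
  have hsum := ((summable_besselClifford (ν + 1) z).hasSum.mul_left (ν + 1)).add hderiv
  rw [show ν + 2 = ν + 1 + 1 by ring]
  refine (HasSum.congr_fun hsum fun k => ?_).tsum_eq
  rcases k with _ | k
  · simp [besselCliffordCoeff_eq_mul ν]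
  · rw [besselCliffordCoeff_eq_mul ν, Nat.add_sub_cancel]
    push_cast
    ring

end BesselClifford

section BesselI

variable {ν x : ℝ}

lemma besselI_eq_rpow_mul_besselClifford (ν : ℝ) (hx : 0 < x) :
    besselI ν x = (x / 2) ^ ν * besselClifford ν (x ^ 2 / 4) := by
  unfold besselI besselClifford besselCliffordCoeff
  rw [← tsum_mul_left]
  refine tsum_congr fun k => ?_
  have hpow : (x / 2) ^ (ν + 2 * (k : ℝ)) = (x / 2) ^ ν * (x ^ 2 / 4) ^ k := by
    rw [Real.rpow_add (by positivity), Real.rpow_mul (by positivity), Real.rpow_natCast]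
    norm_num [div_pow]
  rw [hpow]
  ring

lemma besselI_pos (hν : -1 < ν) (hx : 0 < x) : 0 < besselI ν x := by
  have := besselClifford_pos hν (z := x ^ 2 / 4) (by positivity)
  rw [besselI_eq_rpow_mul_besselClifford ν hx]
  positivity

lemma besselI_eq_add (ν : ℝ) (hx : 0 < x) :
    besselI ν x = 2 * (ν + 1) / x * besselI (ν + 1) x + besselI (ν + 2) x := by
  have hx2 : 0 < x / 2 := by positivity
  simp only [besselI_eq_rpow_mul_besselClifford _ hx, Real.rpow_add hx2, Real.rpow_one,
    Real.rpow_two, besselClifford_eq_add ν]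
  field_simp
  ring

lemma hasDerivAt_besselI (ν : ℝ) (hx : 0 < x) :
    HasDerivAt (besselI ν) (besselI (ν + 1) x + ν / x * besselI ν x) x := by
  have hx2 : 0 < x / 2 := by positivity
  have hpow : HasDerivAt (fun y : ℝ => (y / 2) ^ ν) (1 / 2 * ν * (x / 2) ^ (ν - 1)) x :=
    ((hasDerivAt_id x).div_const 2).rpow_const (Or.inl hx2.ne')
  have hsq : HasDerivAt (fun y : ℝ => y ^ 2 / 4) (2 * x / 4) x := by
    simpa using (hasDerivAt_pow 2 x).div_const 4
  have hprod := hpow.mul ((hasDerivAt_besselClifford ν (x ^ 2 / 4)).comp x hsq)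
  refine (hprod.congr_deriv ?_).congr_of_eventuallyEq ?_
  · simp only [besselI_eq_rpow_mul_besselClifford _ hx, Real.rpow_add hx2, Real.rpow_sub hx2,
      Real.rpow_one, Function.comp_apply]
    field_simp
    ring
  · filter_upwards [Ioi_mem_nhds hx] with y hy
    exact besselI_eq_rpow_mul_besselClifford ν hy

lemma hasDerivAt_besselI_add_one (ν : ℝ) (hx : 0 < x) :
    HasDerivAt (besselI (ν + 1)) (besselI ν x - (ν + 1) / x * besselI (ν + 1) x) x := by
  refine (hasDerivAt_besselI (ν + 1) hx).congr_deriv ?_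
  rw [besselI_eq_add ν hx, show ν + 1 + 1 = ν + 2 by ring]
  ring

lemma rpow_mul_besselI (μ ν : ℝ) (hx : 0 < x) :
    x ^ μ * besselI ν x = (1 / 2) ^ ν * (x ^ (μ + ν) * besselClifford ν (x ^ 2 / 4)) := by
  rw [besselI_eq_rpow_mul_besselClifford ν hx, div_eq_mul_one_div x 2,
    Real.mul_rpow hx.le (by norm_num), Real.rpow_add hx]
  ring

lemma continuousOn_rpow_mul_besselI {μ : ℝ} (hμ : μ ≠ 0) (hμν : 0 < μ + ν) :
    ContinuousOn (fun x => x ^ μ * besselI ν x) (Ici 0) := by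
  have hcont : Continuous fun x : ℝ =>
      (1 / 2) ^ ν * (x ^ (μ + ν) * besselClifford ν (x ^ 2 / 4)) := by
    have := Real.continuous_rpow_const hμν.le
    have := continuous_besselClifford ν
    fun_prop
  refine hcont.continuousOn.congr fun x hx => ?_
  rcases (mem_Ici.mp hx).eq_or_lt with rfl | hx
  · simp [Real.zero_rpow hμ, Real.zero_rpow hμν.ne']
  · exact rpow_mul_besselI μ ν hx

lemma intervalIntegrable_exp_mul_rpow_mul_besselI {μ a b : ℝ} (c : ℝ) (hμν : -1 < μ + ν)
    (ha : 0 ≤ a) (hb : 0 ≤ b) :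
    IntervalIntegrable (fun t => Real.exp (c * t) * t ^ μ * besselI ν t) volume a b := by
  have hcont : Continuous fun t : ℝ =>
      Real.exp (c * t) * ((1 / 2) ^ ν * besselClifford ν (t ^ 2 / 4)) := by
    have := continuous_besselClifford ν
    fun_prop
  refine ((intervalIntegral.intervalIntegrable_rpow' hμν).continuousOn_mul
    hcont.continuousOn).congr fun t ht => ?_
  have ht0 : 0 < t := (le_min ha hb).trans_lt ht.1
  simp only [mul_assoc, rpow_mul_besselI μ ν ht0]
  ring

end BesselI

section Inequalities

variable {γ ν x : ℝ}

lemma hasDerivAt_exp_mul_rpow_mul_besselI_add (c s ν : ℝ) (hx : 0 < x) :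
    HasDerivAt
      (fun y => Real.exp (c * y) * y ^ (ν + 1) * (besselI ν y + s * besselI (ν + 1) y))
      (Real.exp (c * x) * x ^ ν *
        ((2 * ν + 1) * besselI ν x + (c + s) * x * besselI ν x
          + (1 + c * s) * x * besselI (ν + 1) x)) x := by
  have hexp : HasDerivAt (fun y => Real.exp (c * y)) (Real.exp (c * x) * c) x := by
    simpa using ((hasDerivAt_id x).const_mul c).exp
  have hpow : HasDerivAt (fun y : ℝ => y ^ (ν + 1)) ((ν + 1) * x ^ ν) x := by
    simpa using Real.hasDerivAt_rpow_const (p := ν + 1) (Or.inl hx.ne')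
  refine ((hexp.mul hpow).mul ((hasDerivAt_besselI ν hx).add
    ((hasDerivAt_besselI_add_one ν hx).const_mul s))).congr_deriv ?_
  simp only [Pi.add_apply, Pi.mul_apply, Real.rpow_add hx, Real.rpow_one]
  field_simp
  ring

lemma continuousOn_exp_mul_rpow_mul_besselI_add (c s : ℝ) (hν : -(1 / 2) < ν) :
    ContinuousOn
      (fun y => Real.exp (c * y) * y ^ (ν + 1) * (besselI ν y + s * besselI (ν + 1) y))
      (Ici 0) := by
  have hν1 : ν + 1 ≠ 0 := by linarith
  have hI := continuousOn_rpow_mul_besselI (ν := ν) hν1 (by linarith)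
  have hI' := continuousOn_rpow_mul_besselI (ν := ν + 1) hν1 (by linarith)
  have hexp : ContinuousOn (fun y => Real.exp (c * y)) (Ici 0) := by fun_prop
  refine (hexp.mul (hI.add (hI'.const_mul s))).congr fun y _ => ?_
  simp only [Pi.mul_apply, Pi.add_apply]
  ring

lemma besselI_add_one_lt_besselI (hν : -(1 / 2) < ν) (hx : 0 < x) :
    besselI (ν + 1) x < besselI ν x := by
  have hmono := strictMonoOn_of_deriv_pos (convex_Ici 0)
    (continuousOn_exp_mul_rpow_mul_besselI_add 1 (-1) hν) fun y hy => by
      rw [interior_Ici] at hy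
      have hy : 0 < y := hy
      have hI : 0 < besselI ν y := besselI_pos (by linarith) hy
      have hν' : 0 < 2 * ν + 1 := by linarith
      rw [(hasDerivAt_exp_mul_rpow_mul_besselI_add 1 (-1) ν hy).deriv]
      simp only [add_neg_cancel, mul_neg, mul_one, zero_mul, add_zero]
      positivity
  have hpos := hmono self_mem_Ici hx.le hx
  have hν1 : ν + 1 ≠ 0 := by linarith
  simp only [Real.zero_rpow hν1, zero_mul, mul_zero, one_mul, neg_one_mul, ← sub_eq_add_neg] at hpos
  exact sub_pos.mp (pos_of_mul_pos_right hpos (by positivity))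

lemma mul_integral_exp_mul_rpow_mul_besselI_le (hγ : γ ≤ 1) (hν : -(1 / 2) < ν) (hx : 0 ≤ x) :
    (2 * ν + 1) * ∫ t in (0 : ℝ)..x, Real.exp (-γ * t) * t ^ ν * besselI ν t
      ≤ Real.exp (-γ * x) * x ^ (ν + 1) * (besselI ν x + besselI (ν + 1) x) := by
  have hint := intervalIntegrable_exp_mul_rpow_mul_besselI (-γ) (μ := ν) (ν := ν)
    (by linarith) le_rfl hx
  have hν1 : ν + 1 ≠ 0 := by linarith
  rw [← intervalIntegral.integral_const_mul]
  refine (intervalIntegral.integral_le_sub_of_hasDeriv_right_of_le hx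
    ((continuousOn_exp_mul_rpow_mul_besselI_add (-γ) 1 hν).mono Icc_subset_Ici_self)
    (fun t ht => (hasDerivAt_exp_mul_rpow_mul_besselI_add (-γ) 1 ν ht.1).hasDerivWithinAt)
    ((intervalIntegrable_iff_integrableOn_Icc_of_le hx).mp (hint.const_mul _))
    fun t ht => ?_).trans_eq (by simp [Real.zero_rpow hν1])
  have ht0 : 0 < t := ht.1
  have hI : 0 < besselI ν t := besselI_pos (by linarith) ht0
  have hI' : 0 < besselI (ν + 1) t := besselI_pos (by linarith) ht0
  have hextra : 0 ≤ Real.exp (-γ * t) * t ^ ν *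
      ((1 - γ) * (t * (besselI ν t + besselI (ν + 1) t))) := by
    have : 0 ≤ 1 - γ := by linarith
    positivity
  linarith

lemma mul_besselI_add_besselI_lt (hν : -(3 / 2) < ν) (hx : 0 < x) :
    x * (besselI ν x + besselI (ν + 1) x) < 2 * (x + ν + 1) * besselI (ν + 1) x := by
  have hrec : x * besselI ν x = 2 * (ν + 1) * besselI (ν + 1) x + x * besselI (ν + 2) x := by
    rw [besselI_eq_add ν hx]
    field_simp
  have hlt : besselI (ν + 2) x < besselI (ν + 1) x := by
    simpa only [show ν + 1 + 1 = ν + 2 by ring] using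
      besselI_add_one_lt_besselI (ν := ν + 1) (by linarith) hx
  linarith [mul_lt_mul_of_pos_left hlt hx]

lemma mul_integral_exp_mul_rpow_mul_besselI_lt (hγ : γ ≤ 1) (hν : -(1 / 2) < ν) (hx : 0 < x) :
    (2 * ν + 1) * ∫ t in (0 : ℝ)..x, Real.exp (-γ * t) * t ^ ν * besselI ν t
      < 2 * (x + ν + 1) * (Real.exp (-γ * x) * x ^ ν * besselI (ν + 1) x) := by
  calc _ ≤ Real.exp (-γ * x) * x ^ (ν + 1) * (besselI ν x + besselI (ν + 1) x) :=
        mul_integral_exp_mul_rpow_mul_besselI_le hγ hν hx.le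
    _ = Real.exp (-γ * x) * x ^ ν * (x * (besselI ν x + besselI (ν + 1) x)) := by
        rw [Real.rpow_add hx, Real.rpow_one]
        ring
    _ < Real.exp (-γ * x) * x ^ ν * (2 * (x + ν + 1) * besselI (ν + 1) x) :=
        mul_lt_mul_of_pos_left (mul_besselI_add_besselI_lt (by linarith) hx) (by positivity)
    _ = _ := by ring

lemma mul_integral_exp_mul_rpow_mul_besselI_lt_of_mul_le_two (hγ0 : -1 ≤ γ) (hγ1 : γ < 1)
    (hν : -(1 / 2) < ν) (hx : 0 < x) (hxγ : x * (1 - γ) ≤ 2) :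
    (2 * ν + 1) * (1 - γ) * ∫ t in (0 : ℝ)..x, Real.exp (-γ * t) * t ^ ν * besselI ν t
      < 4 * (ν + 2) * (Real.exp (-γ * x) * x ^ ν * besselI (ν + 1) x) := by
  have : 0 < 1 - γ := by linarith
  have hI : 0 < besselI (ν + 1) x := besselI_pos (by linarith) hx
  have hcoeff : (1 - γ) * (2 * (x + ν + 1)) ≤ 4 * (ν + 2) := by
    linarith [mul_nonneg (by linarith : 0 ≤ ν + 1) (by linarith : 0 ≤ 1 + γ)]
  calc _ = (1 - γ) * ((2 * ν + 1) *
        ∫ t in (0 : ℝ)..x, Real.exp (-γ * t) * t ^ ν * besselI ν t) := by ring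
    _ < (1 - γ) * (2 * (x + ν + 1) * (Real.exp (-γ * x) * x ^ ν * besselI (ν + 1) x)) := by
        have := mul_integral_exp_mul_rpow_mul_besselI_lt hγ1.le hν hx
        gcongr
    _ ≤ _ := by
        rw [← mul_assoc]
        gcongr

lemma hasDerivAt_exp_mul_rpow_mul_besselI_add_one (γ ν : ℝ) (hx : 0 < x) :
    HasDerivAt (fun y => Real.exp (-γ * y) * y ^ ν * besselI (ν + 1) y)
      (Real.exp (-γ * x) * x ^ ν * (besselI ν x - (γ + 1 / x) * besselI (ν + 1) x)) x := by
  have hexp : HasDerivAt (fun y => Real.exp (-γ * y)) (Real.exp (-γ * x) * -γ) x := by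
    simpa using ((hasDerivAt_id x).const_mul (-γ)).exp
  have hpow : HasDerivAt (fun y : ℝ => y ^ ν) (ν * x ^ (ν - 1)) x :=
    Real.hasDerivAt_rpow_const (Or.inl hx.ne')
  refine ((hexp.mul hpow).mul (hasDerivAt_besselI_add_one ν hx)).congr_deriv ?_
  simp only [Pi.mul_apply, Real.rpow_sub hx, Real.rpow_one]
  field_simp
  ring

lemma half_one_sub_mul_besselI_le (hγ : -1 ≤ γ) (hν : -(1 / 2) < ν) (hx : 0 < x)
    (hxγ : 2 ≤ x * (1 - γ)) :
    (1 - γ) / 2 * besselI ν x ≤ besselI ν x - (γ + 1 / x) * besselI (ν + 1) x := by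
  have hcoeff : γ + 1 / x ≤ (1 + γ) / 2 := by
    have : 1 / x ≤ (1 - γ) / 2 := by
      rw [div_le_iff₀ hx]
      linarith
    linarith
  have hI : 0 < besselI (ν + 1) x := besselI_pos (by linarith) hx
  have : (γ + 1 / x) * besselI (ν + 1) x ≤ (1 + γ) / 2 * besselI ν x := by
    have hlt := besselI_add_one_lt_besselI hν hx
    have : 0 ≤ (1 + γ) / 2 := by linarith
    gcongr
  linarith

lemma half_one_sub_mul_integral_exp_mul_rpow_mul_besselI_le {a : ℝ} (hγ : -1 ≤ γ)
    (hν : -(1 / 2) < ν) (ha : 0 < a) (haγ : 2 ≤ a * (1 - γ)) (hax : a ≤ x) :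
    (1 - γ) / 2 * ∫ t in a..x, Real.exp (-γ * t) * t ^ ν * besselI ν t
      ≤ Real.exp (-γ * x) * x ^ ν * besselI (ν + 1) x
        - Real.exp (-γ * a) * a ^ ν * besselI (ν + 1) a := by
  have hint := intervalIntegrable_exp_mul_rpow_mul_besselI (-γ) (μ := ν) (ν := ν)
    (by linarith) ha.le (ha.le.trans hax)
  have hderiv : ∀ t ∈ Icc a x, HasDerivAt _ _ t := fun t ht =>
    hasDerivAt_exp_mul_rpow_mul_besselI_add_one γ ν (ha.trans_le ht.1)
  rw [← intervalIntegral.integral_const_mul]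
  refine intervalIntegral.integral_le_sub_of_hasDeriv_right_of_le hax
    (fun t ht => (hderiv t ht).continuousAt.continuousWithinAt)
    (fun t ht => (hderiv t (Ioo_subset_Icc_self ht)).hasDerivWithinAt)
    ((intervalIntegrable_iff_integrableOn_Icc_of_le hax).mp (hint.const_mul _)) fun t ht => ?_
  have ht0 : 0 < t := ha.trans ht.1
  have hγ1 : 0 < 1 - γ := pos_of_mul_pos_right (by linarith : 0 < a * (1 - γ)) ha.le
  have htγ : 2 ≤ t * (1 - γ) := haγ.trans (by have := ht.1.le; gcongr)
  rw [mul_left_comm]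
  have := half_one_sub_mul_besselI_le hγ hν ht0 htγ
  gcongr

end Inequalities

theorem stmt_5_general (γ ν : ℝ) (hγ0 : -1 ≤ γ) (hγ1 : γ < 1) (hν : -(1 / 2) < ν) (x : ℝ)
    (hx : 0 < x) :
    ∫ t in (0 : ℝ)..x, Real.exp (-γ * t) * t ^ ν * besselI ν t <
      4 * (ν + 2) / ((2 * ν + 1) * (1 - γ)) *
        (Real.exp (-γ * x) * x ^ ν * besselI (ν + 1) x) := by
  have hν' : 0 < 2 * ν + 1 := by linarith
  have hγ' : 0 < 1 - γ := by linarith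
  rw [div_mul_eq_mul_div, lt_div_iff₀' (mul_pos hν' hγ')]
  rcases le_total (x * (1 - γ)) 2 with hxγ | hxγ
  · exact mul_integral_exp_mul_rpow_mul_besselI_lt_of_mul_le_two hγ0 hγ1 hν hx hxγ
  obtain ⟨a, ha, haγ⟩ : ∃ a, 0 < a ∧ a * (1 - γ) = 2 :=
    ⟨2 / (1 - γ), by positivity, div_mul_cancel₀ _ hγ'.ne'⟩
  have hax : a ≤ x := le_of_mul_le_mul_right (haγ.trans_le hxγ) hγ'
  have hhead := mul_integral_exp_mul_rpow_mul_besselI_lt_of_mul_le_two hγ0 hγ1 hν ha haγ.le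
  have htail := half_one_sub_mul_integral_exp_mul_rpow_mul_besselI_le hγ0 hν ha haγ.ge hax
  have htail_nonneg : 0 ≤ ∫ t in a..x, Real.exp (-γ * t) * t ^ ν * besselI ν t :=
    intervalIntegral.integral_nonneg hax fun t ht => by
      have ht0 : 0 < t := ha.trans_le ht.1
      have := besselI_pos (by linarith : -1 < ν) ht0
      positivity
  have hint {b c : ℝ} (hb : 0 ≤ b) (hc : 0 ≤ c) :=
    intervalIntegrable_exp_mul_rpow_mul_besselI (-γ) (by linarith : -1 < ν + ν) hb hc
  rw [← intervalIntegral.integral_add_adjacent_intervals (hint le_rfl ha.le) (hint ha.le hx.le)]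
  have hW_le := sub_nonneg.mp ((mul_nonneg (half_pos hγ').le htail_nonneg).trans htail)
  linarith [mul_le_mul_of_nonneg_left htail hν'.le]

theorem stmt_5 (γ ν : ℝ) (hγ0 : 0 < γ) (hγ1 : γ < 1) (hν : -(1/2) < ν) (x : ℝ) (hx : 0 < x) :
    ∫ t in (0 : ℝ)..x, Real.exp (-γ * t) * t ^ ν * besselI ν t <
      (2 * (2 * ν + 7) / ((2 * ν + 1) * (1 - γ))) *
        (Real.exp (-γ * x) * x ^ ν * besselI (ν + 1) x) := by
  refine (stmt_5_general γ ν (by linarith) hγ1 hν x hx).trans_le ?_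
  have := besselI_pos (by linarith : -1 < ν + 1) hx
  have := mul_pos (by linarith : 0 < 2 * ν + 1) (sub_pos.mpr hγ1)
  gcongr ?_ / _ * _
  linarith
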